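/- arXiv:1006.0472 — 4 statements merged into one kernel-verified Lean document; each statement's English description precedes it below -/
import Mathlib

section
/- Let d ≥ 1 and k ≥ 2. Suppose ℤ^d is the disjoint union of k cosets T_1, …, T_k, where each T_j = v_j + L_j with v_j ∈ ℤ^d and L_j a Cartesian subgroup of ℤ^d (i.e., L_j = ∏_{i=1}^d n_{j,i}ℤ for positive integers n_{j,1}, …, n_{j,d}). Then there exist indices j ≠ j' with L_j = L_{j'}, i.e., n_{j,i} = n_{j',i} for all i = 1, …, d. -/
/-!
For a subgroup `L` of an abelian group `G`, the kernel of `R[G] → R[G ⧸ L]` cuts out the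
characters of `G` that are trivial on `L`. If finitely many cosets `v j + L j` tile `G`,
then the augmentation of `R[G]` is the sum over `j` of the coefficient of `v j` in `R[G ⧸ L j]`.
On the intersection of the kernels for `j ≠ j₀`, the augmentation and every term other than that
of `j₀` vanish, hence so does the term of `j₀`; as the intersection is an ideal, it is invariant
under translation, so it lies in the kernel for `j₀`. If a character `χ` is trivial on `L j₀`, then
the kernel of evaluation at `χ` is a prime ideal containing this intersection. It therefore
contains one of the intersected kernels, that is, `χ` is trivial on some `L j` with `j ≠ j₀`.

For Cartesian subgroups, choose for each `j ≠ j₀` with `L j ≰ L j₀` a coordinate `i` such that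
`n j i` is not a multiple of `n j₀ i`, and let `χ` have order `n j₀ i` on these coordinates and be
trivial on the others: then `L j ≤ L j₀` for the `j` found above, and equality holds if `L j₀` is
minimal.
-/

open AddMonoidAlgebra

section GroupAlgebra

variable {G R : Type*} [AddCommGroup G] [CommRing R]

variable (R) in
/-- The ideal of `R[G]` of all elements that vanish in the group algebra of `G ⧸ L`. -/
noncomputable def quotientIdeal (L : AddSubgroup G) : Ideal R[G] :=
  RingHom.ker (mapDomainRingHom R (QuotientAddGroup.mk' L))

lemma mem_quotientIdeal {L : AddSubgroup G} {q : R[G]} :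
    q ∈ quotientIdeal R L ↔ mapDomain (QuotientAddGroup.mk : G → G ⧸ L) q = 0 :=
  Iff.rfl

lemma single_sub_one_mem_quotientIdeal {L : AddSubgroup G} {g : G} (hg : g ∈ L) :
    single g (1 : R) - 1 ∈ quotientIdeal R L := by
  rw [quotientIdeal, RingHom.mem_ker, map_sub, map_one, mapDomainRingHom_apply, mapDomain_single,
    QuotientAddGroup.mk'_apply, (QuotientAddGroup.eq_zero_iff g).2 hg, one_def, sub_self]

lemma le_quotientIdeal_of_coeff_eq_zero {L : AddSubgroup G} (v : G) {I : Ideal R[G]}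
    (hI : ∀ q ∈ I, (mapDomain (QuotientAddGroup.mk : G → G ⧸ L) q).coeff v = 0) :
    I ≤ quotientIdeal R L := by
  intro q hq
  rw [mem_quotientIdeal]
  ext y
  obtain ⟨g, rfl⟩ := QuotientAddGroup.mk_surjective y
  have htranslate : mapDomain (QuotientAddGroup.mk : G → G ⧸ L) (q * single (v - g) 1)
      = mapDomain (QuotientAddGroup.mk : G → G ⧸ L) q * single ((v - g : G) : G ⧸ L) 1 := by
    simpa using map_mul (mapDomainRingHom R (QuotientAddGroup.mk' L)) q (single (v - g) 1)
  simpa [htranslate] using hI _ (I.mul_mem_right (single (v - g) 1) hq)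

/-- Evaluation of a group algebra at a character, i.e. the linear extension of `χ` to `R[G]`. For
the trivial character this is the augmentation. -/
noncomputable def charEval (χ : AddChar G R) : R[G] →ₐ[R] R :=
  AddMonoidAlgebra.lift R R G χ.toMonoidHom

lemma charEval_single (χ : AddChar G R) (g : G) (r : R) : charEval χ (single g r) = r * χ g := by
  simp [charEval]

lemma quotientIdeal_le_ker_charEval_iff {L : AddSubgroup G} {χ : AddChar G R} :
    quotientIdeal R L ≤ RingHom.ker (charEval χ) ↔ ∀ g ∈ L, χ g = 1 := by
  constructor
  · intro hle g hg
    have hker := hle (single_sub_one_mem_quotientIdeal hg)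
    rwa [RingHom.mem_ker, map_sub, map_one, charEval_single, one_mul, sub_eq_zero] at hker
  · intro hχ q hq
    let χL : AddChar (G ⧸ L) R :=
      AddChar.toAddMonoidHomEquiv.symm (QuotientAddGroup.lift L χ.toAddMonoidHom hχ)
    have hfactor (p : R[G]) : charEval χL (mapDomain QuotientAddGroup.mk p) = charEval χ p := by
      induction p using AddMonoidAlgebra.induction_linear with
      | zero => simp
      | add p₁ p₂ h₁ h₂ => simp only [mapDomain_add, map_add, h₁, h₂]
      | single g r =>
        rw [mapDomain_single, charEval_single, charEval_single]
        rfl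
    rw [RingHom.mem_ker, ← hfactor, mem_quotientIdeal.1 hq, map_zero]

end GroupAlgebra

section CosetTiling

variable {ι G R : Type*} [AddCommGroup G] {v : ι → G} {L : ι → AddSubgroup G}

/-- The cosets `v j + L j` form a disjoint-union decomposition of `G`, encoded as: every element
lies in the coset of exactly one index `j`. -/
def IsCosetTiling (v : ι → G) (L : ι → AddSubgroup G) : Prop :=
  ∀ g, ∃! j, g - v j ∈ L j

lemma IsCosetTiling.of_disjoint_of_iUnion_eq_univ {T : ι → Set G}
    (hT : ∀ j g, g ∈ T j ↔ g - v j ∈ L j) (hdisj : ∀ j j', j ≠ j' → Disjoint (T j) (T j'))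
    (hcover : ⋃ j, T j = Set.univ) : IsCosetTiling v L := by
  intro g
  obtain ⟨j, hj⟩ := Set.iUnion_eq_univ_iff.1 hcover g
  refine ⟨j, (hT j g).1 hj, fun j' hj' => ?_⟩
  by_contra hne
  exact Set.disjoint_left.1 (hdisj j' j hne) ((hT j' g).2 hj') hj

lemma IsCosetTiling.sum_coeff_eq_charEval_one [Fintype ι] [CommRing R] (h : IsCosetTiling v L)
    (q : R[G]) :
    ∑ j, (mapDomain (QuotientAddGroup.mk : G → G ⧸ L j) q).coeff (v j) = charEval 1 q := by
  induction q using AddMonoidAlgebra.induction_linear with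
  | zero => simp
  | add p q hp hq =>
    simp only [mapDomain_add, coeff_add, Finsupp.add_apply, Finset.sum_add_distrib, map_add, hp, hq]
  | single g r =>
    obtain ⟨j, hj, hunique⟩ := h g
    have hcoset (i : ι) : (g : G ⧸ L i) = v i ↔ g - v i ∈ L i := by
      rw [← sub_eq_zero, ← QuotientAddGroup.mk_sub, QuotientAddGroup.eq_zero_iff]
    simp only [mapDomain_single, charEval_single, AddChar.one_apply, mul_one, coeff_single]
    rw [Fintype.sum_eq_single j fun i hij =>
      Finsupp.single_eq_of_ne' fun hi => hij (hunique i ((hcoset i).1 hi))]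
    rw [(hcoset j).2 hj, Finsupp.single_eq_same]

lemma IsCosetTiling.inf_quotientIdeal_le [Fintype ι] [DecidableEq ι] [Nontrivial ι] [CommRing R]
    (h : IsCosetTiling v L) (j₀ : ι) :
    (Finset.univ.erase j₀).inf (fun j => quotientIdeal R (L j)) ≤ quotientIdeal R (L j₀) := by
  refine le_quotientIdeal_of_coeff_eq_zero (v j₀) fun q hq => ?_
  have hmem (j : ι) (hj : j ≠ j₀) : q ∈ quotientIdeal R (L j) :=
    (Submodule.mem_finsetInf.1 hq) j (Finset.mem_erase.2 ⟨hj, Finset.mem_univ j⟩)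
  obtain ⟨j₁, hj₁⟩ := exists_ne j₀
  have haug : charEval 1 q = 0 :=
    quotientIdeal_le_ker_charEval_iff.2 (fun _ _ => AddChar.one_apply _) (hmem j₁ hj₁)
  calc (mapDomain (QuotientAddGroup.mk : G → G ⧸ L j₀) q).coeff (v j₀)
      = ∑ j, (mapDomain (QuotientAddGroup.mk : G → G ⧸ L j) q).coeff (v j) := by
        rw [Fintype.sum_eq_single j₀ fun j hj => by
          rw [mem_quotientIdeal.1 (hmem j hj), coeff_zero, Finsupp.zero_apply]]
    _ = charEval 1 q := h.sum_coeff_eq_charEval_one q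
    _ = 0 := haug

theorem IsCosetTiling.exists_ne_forall_char_eq_one [Finite ι] [Nontrivial ι] [CommRing R]
    [IsDomain R] (h : IsCosetTiling v L) (χ : AddChar G R) (j₀ : ι) (hχ : ∀ g ∈ L j₀, χ g = 1) :
    ∃ j ≠ j₀, ∀ g ∈ L j, χ g = 1 := by
  classical
  cases nonempty_fintype ι
  have hprime : (RingHom.ker (charEval χ)).IsPrime := RingHom.ker_isPrime _
  have hle := (h.inf_quotientIdeal_le j₀).trans (quotientIdeal_le_ker_charEval_iff.2 hχ)
  obtain ⟨j, hj, hjle⟩ := hprime.inf_le'.1 hle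
  exact ⟨j, Finset.ne_of_mem_erase hj, quotientIdeal_le_ker_charEval_iff.1 hjle⟩

end CosetTiling

section Cartesian

variable {ι κ : Type*}

/-- The Cartesian subgroup `∏ i, (n i)ℤ` of `κ → ℤ`. The value `n i = 0` is allowed and stands for
the zero subgroup in the `i`-th coordinate. -/
def cartesianSubgroup (n : κ → ℕ) : AddSubgroup (κ → ℤ) :=
  AddSubgroup.pi Set.univ fun i => AddSubgroup.zmultiples (n i : ℤ)

lemma mem_cartesianSubgroup {n : κ → ℕ} {x : κ → ℤ} :
    x ∈ cartesianSubgroup n ↔ ∀ i, (n i : ℤ) ∣ x i := by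
  simp only [cartesianSubgroup, AddSubgroup.mem_pi, Set.mem_univ, true_imp_iff,
    Int.mem_zmultiples_iff]

lemma single_mem_cartesianSubgroup [DecidableEq κ] (n : κ → ℕ) (i : κ) :
    Pi.single i (n i : ℤ) ∈ cartesianSubgroup n := by
  rw [mem_cartesianSubgroup]
  intro j
  obtain rfl | hij := eq_or_ne j i
  · rw [Pi.single_eq_same]
  · rw [Pi.single_eq_of_ne hij]
    exact dvd_zero _

lemma cartesianSubgroup_le_iff {m n : κ → ℕ} :
    cartesianSubgroup m ≤ cartesianSubgroup n ↔ ∀ i, n i ∣ m i := by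
  classical
  constructor
  · intro hle i
    have hdvd := mem_cartesianSubgroup.1 (hle (single_mem_cartesianSubgroup m i)) i
    rwa [Pi.single_eq_same, Int.natCast_dvd_natCast] at hdvd
  · intro hdvd x hx
    rw [mem_cartesianSubgroup] at hx ⊢
    exact fun i => (Int.natCast_dvd_natCast.2 (hdvd i)).trans (hx i)

lemma cartesianSubgroup_injective :
    Function.Injective (cartesianSubgroup : (κ → ℕ) → AddSubgroup (κ → ℤ)) := fun _ _ heq =>
  funext fun i => Nat.dvd_antisymm (cartesianSubgroup_le_iff.1 heq.ge i)
    (cartesianSubgroup_le_iff.1 heq.le i)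

/-- The character `x ↦ ∏ i ∈ S, w i ^ x i` of `κ → ℤ`. The finite set `S` of coordinates makes the
product meaningful for infinite `κ`. -/
def coordinateChar {R : Type*} [CommMonoid R] (S : Finset κ) (w : κ → Rˣ) : AddChar (κ → ℤ) R where
  toFun x := ((∏ i ∈ S, w i ^ x i : Rˣ) : R)
  map_zero_eq_one' := by simp
  map_add_eq_mul' x y := by simp [zpow_add, Finset.prod_mul_distrib]

lemma coordinateChar_eq_one_of_mem {R : Type*} [CommMonoid R] (S : Finset κ) {w : κ → Rˣ}
    {n : κ → ℕ} (hw : ∀ i, w i ^ n i = 1) {x : κ → ℤ} (hx : x ∈ cartesianSubgroup n) :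
    coordinateChar S w x = 1 := by
  refine Units.val_eq_one.2 (Finset.prod_eq_one fun i _ => ?_)
  obtain ⟨c, hc⟩ := mem_cartesianSubgroup.1 hx i
  rw [hc, zpow_mul, zpow_natCast, hw, one_zpow]

lemma coordinateChar_single [DecidableEq κ] {R : Type*} [CommMonoid R] {S : Finset κ} (w : κ → Rˣ)
    {i : κ} (hi : i ∈ S) (a : ℤ) :
    coordinateChar S w (Pi.single i a) = ((w i ^ a : Rˣ) : R) := by
  refine congrArg Units.val ((Finset.prod_eq_single_of_mem i hi fun j _ hji => ?_).trans ?_)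
  · rw [Pi.single_eq_of_ne hji, zpow_zero]
  · rw [Pi.single_eq_same]

lemma exists_complex_units_orderOf_eq (n : ℕ) : ∃ w : ℂˣ, orderOf w = n := by
  obtain rfl | hn := eq_or_ne n 0
  · refine ⟨Units.mk0 2 two_ne_zero, orderOf_eq_zero_iff'.2 fun m hm heq => ?_⟩
    have hpow : (2 : ℂ) ^ m = 1 := congrArg Units.val heq
    exact (Nat.one_lt_two_pow hm.ne').ne' (by exact_mod_cast hpow)
  · have hroot := Complex.isPrimitiveRoot_exp n hn
    refine ⟨Units.mk0 _ (hroot.ne_zero hn), ?_⟩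
    rw [← orderOf_units, Units.val_mk0, ← hroot.eq_orderOf]

theorem IsCosetTiling.exists_ne_cartesianSubgroup_le [Finite ι] [Nontrivial ι] {v : ι → κ → ℤ}
    {n : ι → κ → ℕ} (h : IsCosetTiling v fun j => cartesianSubgroup (n j)) (j₀ : ι) :
    ∃ j ≠ j₀, cartesianSubgroup (n j) ≤ cartesianSubgroup (n j₀) := by
  classical
  cases nonempty_fintype ι
  choose w hw using fun i => exists_complex_units_orderOf_eq (n j₀ i)
  by_contra! hnle
  have hndvd (j : {j // j ≠ j₀}) : ∃ i, ¬ n j₀ i ∣ n j i := by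
    simpa only [cartesianSubgroup_le_iff, not_forall] using hnle j j.2
  choose i hi using hndvd
  have hχ : ∀ x ∈ cartesianSubgroup (n j₀), coordinateChar (Finset.univ.image i) w x = 1 :=
    fun x hx => coordinateChar_eq_one_of_mem _ (fun l => hw l ▸ pow_orderOf_eq_one (w l)) hx
  obtain ⟨j, hj, hχj⟩ := h.exists_ne_forall_char_eq_one _ j₀ hχ
  have hone := hχj _ (single_mem_cartesianSubgroup (n j) (i ⟨j, hj⟩))
  rw [coordinateChar_single w (Finset.mem_image_of_mem i (Finset.mem_univ _)), zpow_natCast,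
    Units.val_eq_one] at hone
  exact hi ⟨j, hj⟩ (hw (i ⟨j, hj⟩) ▸ orderOf_dvd_of_pow_eq_one hone)

theorem tiling_lattices_repeated_subgroup_general [Finite ι] [Nontrivial ι] {v : ι → κ → ℤ}
    {n : ι → κ → ℕ} (h : IsCosetTiling v fun j => cartesianSubgroup (n j)) :
    ∃ j j', j ≠ j' ∧ n j = n j' := by
  obtain ⟨j₀, hmin⟩ :=
    Set.finite_univ.exists_minimalFor (fun j => cartesianSubgroup (n j)) _ Set.univ_nonempty
  obtain ⟨j, hj, hle⟩ := h.exists_ne_cartesianSubgroup_le j₀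
  exact ⟨j, j₀, hj, cartesianSubgroup_injective (hle.antisymm (hmin.2 (Set.mem_univ j) hle))⟩

end Cartesian

/-- **Generalized Mirsky–Newman theorem** (two subgroups coincide). If `ℤ^d`
(`d ≥ 1`) is the disjoint union of `k ≥ 2` cosets `T j = v j + ∏ i, (n j i)ℤ`
of Cartesian subgroups, then two of the Cartesian subgroups coincide, i.e.
there are `j ≠ j'` with `n j i = n j' i` for all `i`. -/
theorem tiling_lattices_repeated_subgroup
    (d k : ℕ) (hd : 1 ≤ d) (hk : 2 ≤ k)
    (v : Fin k → (Fin d → ℤ)) (n : Fin k → Fin d → ℕ)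
    (hn : ∀ j i, 0 < n j i)
    (T : Fin k → Set (Fin d → ℤ))
    (hT : ∀ j, T j = {w : Fin d → ℤ | ∀ i, (n j i : ℤ) ∣ (w i - v j i)})
    (hdisj : ∀ j j', j ≠ j' → Disjoint (T j) (T j'))
    (hcover : (⋃ j, T j) = Set.univ) :
    ∃ j j', j ≠ j' ∧ ∀ i, n j i = n j' i := by
  have : Nontrivial (Fin k) := Fin.nontrivial_iff_two_le.2 hk
  have htiling : IsCosetTiling v fun j => cartesianSubgroup (n j) :=
    .of_disjoint_of_iUnion_eq_univ
      (fun j _ => by rw [hT, mem_cartesianSubgroup]; rfl) hdisj hcover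
  obtain ⟨j, j', hne, heq⟩ := tiling_lattices_repeated_subgroup_general htiling
  exact ⟨j, j', hne, congrFun heq⟩
end

section
/- Let d ≥ 1 and k ≥ 2. Suppose ℤ^d is the disjoint union of k cosets T_1, …, T_k of Cartesian subgroups of ℤ^d. Then there exist indices j ≠ j' and a vector w ∈ ℤ^d such that T_j = w + T_{j'}, i.e., T_j is a translate of T_{j'}. -/
/-!
A character `ψ` of a finite abelian group sums to `0` over every coset of a subgroup on which it is
nontrivial, and to a nonzero number over the cosets of any other subgroup. Summing `ψ` over a group
partitioned into at least two cosets, one sees that `ψ` cannot be trivial on exactly one of the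
subgroups involved. In an infinite group, B. H. Neumann's lemma shows that the subgroups of a finite
coset partition have finite index, so that one may pass to the quotient by their intersection.

For cosets of Cartesian subgroups of `ℤ^d`, let `L = ∏ aᵢℤ` be minimal among the subgroups involved
and choose `ψ x = ∏ ζᵢ ^ xᵢ` with `ζᵢ` a primitive `aᵢ`-th root of unity (of infinite order if
`aᵢ = 0`). A Cartesian subgroup on which `ψ` is trivial is contained in `L`, hence, if it is one of
those involved, equal to `L`.
-/

open Finset
open scoped Pointwise

/-- The cosets `v j + H j` partition the abelian group `G`; that a point lies in the `j`-th coset is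
expressed as `x - v j ∈ H j`. -/
def IsCosetPartition {G κ : Type*} [AddCommGroup G] (v : κ → G) (H : κ → AddSubgroup G) : Prop :=
  ∀ x, ∃! j, x - v j ∈ H j

section CosetPartition

variable {G G' R κ : Type*} [AddCommGroup G] [AddCommGroup G']
  [CommSemiring R] [IsDomain R] [CharZero R] {v : κ → G} {H : κ → AddSubgroup G}

theorem sum_addChar_coset_eq_zero_iff [Fintype G] (ψ : AddChar G R) (H : AddSubgroup G)
    [DecidablePred (· ∈ H)] (v : G) :
    ∑ x with x - v ∈ H, ψ x = 0 ↔ ∃ x ∈ H, ψ x ≠ 1 := by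
  have factor : ∑ x with x - v ∈ H, ψ x = (∑ h : H, ψ.compAddMonoidHom H.subtype h) * ψ v :=
    calc ∑ x with x - v ∈ H, ψ x = ∑ h with h ∈ H, ψ (h + v) :=
          sum_equiv (Equiv.subRight v) (by simp) (by simp)
      _ = ∑ h : H, ψ (h + v) := sum_subtype _ (by simp) _
      _ = (∑ h : H, ψ.compAddMonoidHom H.subtype h) * ψ v := by
          simp only [AddChar.map_add_eq_mul, sum_mul, AddChar.compAddMonoidHom_apply,
            AddSubgroup.subtype_apply]
  rw [factor, mul_eq_zero_iff_right (ψ.val_isUnit v).ne_zero, AddChar.sum_eq_zero_iff_ne_zero,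
    AddChar.ne_zero_iff]
  simp only [AddChar.compAddMonoidHom_apply, AddSubgroup.subtype_apply, Subtype.exists, exists_prop]

namespace IsCosetPartition

theorem sum_eq_sum_coset [Fintype G] [Fintype κ] [∀ j, DecidablePred (· ∈ H j)] {M : Type*}
    [AddCommMonoid M] (h : IsCosetPartition v H) (f : G → M) :
    ∑ x, f x = ∑ j, ∑ x with x - v j ∈ H j, f x := by
  classical
  choose c hc hc_unique using h
  have mem_iff (x : G) (j : κ) : c x = j ↔ x - v j ∈ H j :=
    ⟨fun hj => hj ▸ hc x, fun hj => (hc_unique x j hj).symm⟩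
  calc ∑ x, f x = ∑ j, ∑ x with c x = j, f x := (sum_fiberwise univ c f).symm
    _ = ∑ j, ∑ x with x - v j ∈ H j, f x :=
        sum_congr rfl fun j _ => by rw [filter_congr fun x _ => mem_iff x j]

theorem exists_ne_addChar_eq_one_of_finite [Finite G] [Finite κ] [Nontrivial κ]
    (h : IsCosetPartition v H) (ψ : AddChar G R) {j₀ : κ} (hψ : ∀ x ∈ H j₀, ψ x = 1) :
    ∃ j ≠ j₀, ∀ x ∈ H j, ψ x = 1 := by
  classical
  have := Fintype.ofFinite G
  have := Fintype.ofFinite κ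
  by_contra! nontrivial_of_ne
  have ψ_ne_zero : ψ ≠ 0 := by
    obtain ⟨j, hj⟩ := exists_ne j₀
    obtain ⟨x, -, hx⟩ := nontrivial_of_ne j hj
    exact AddChar.ne_zero_iff.2 ⟨x, hx⟩
  have sum_coset_eq_zero : ∑ x with x - v j₀ ∈ H j₀, ψ x = 0 :=
    calc ∑ x with x - v j₀ ∈ H j₀, ψ x = ∑ j, ∑ x with x - v j ∈ H j, ψ x :=
          (Fintype.sum_eq_single j₀ fun j hj =>
            (sum_addChar_coset_eq_zero_iff ψ (H j) (v j)).2 (nontrivial_of_ne j hj)).symm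
      _ = ∑ x, ψ x := (h.sum_eq_sum_coset ψ).symm
      _ = 0 := AddChar.sum_eq_zero_iff_ne_zero.2 ψ_ne_zero
  obtain ⟨x, hx, hx_ne⟩ := (sum_addChar_coset_eq_zero_iff ψ (H j₀) (v j₀)).1 sum_coset_eq_zero
  exact hx_ne (hψ x hx)

theorem finiteIndex [Finite κ] (h : IsCosetPartition v H) (j : κ) : (H j).FiniteIndex := by
  classical
  have := Fintype.ofFinite κ
  have mem_coset_iff (x : G) (j : κ) : x ∈ v j +ᵥ (H j : Set G) ↔ x - v j ∈ H j := by
    rw [mem_leftAddCoset_iff, SetLike.mem_coe, neg_add_eq_sub]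
  have cover : ⋃ j ∈ (univ : Finset κ), v j +ᵥ (H j : Set G) = Set.univ :=
    Set.eq_univ_of_forall fun x => by
      obtain ⟨j, hj, -⟩ := h x
      exact Set.mem_biUnion (mem_univ j) ((mem_coset_iff x j).2 hj)
  have v_mem :=
    Set.eq_univ_iff_forall.1 (AddSubgroup.leftCoset_cover_filter_FiniteIndex cover) (v j)
  simp only [mem_filter, mem_univ, true_and, Set.mem_iUnion, exists_prop, mem_coset_iff] at v_mem
  obtain ⟨j', hfin, hj'⟩ := v_mem
  have self_mem : v j - v j ∈ H j := by simp
  rwa [(h (v j)).unique self_mem hj']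

theorem map (h : IsCosetPartition v H) {f : G →+ G'} (hf : Function.Surjective f)
    (hker : ∀ j, f.ker ≤ H j) : IsCosetPartition (fun j => f (v j)) fun j => (H j).map f := by
  intro y
  obtain ⟨x, rfl⟩ := hf y
  have mem_iff (j : κ) : f x - f (v j) ∈ (H j).map f ↔ x - v j ∈ H j := by
    rw [← map_sub, ← AddSubgroup.mem_comap, AddSubgroup.comap_map_eq_self (hker j)]
  simpa only [mem_iff] using h x

theorem exists_ne_addChar_eq_one [Finite κ] [Nontrivial κ] (h : IsCosetPartition v H)
    (ψ : AddChar G R) {j₀ : κ} (hψ : ∀ x ∈ H j₀, ψ x = 1) :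
    ∃ j ≠ j₀, ∀ x ∈ H j, ψ x = 1 := by
  let K := ⨅ j, H j
  have := h.finiteIndex
  have : K.FiniteIndex := AddSubgroup.finiteIndex_iInf this
  have hK (j : κ) : (QuotientAddGroup.mk' K).ker ≤ H j := by
    rw [QuotientAddGroup.ker_mk']
    exact iInf_le H j
  let ψK : AddChar (G ⧸ K) R := AddChar.toAddMonoidHomEquiv.symm
    (QuotientAddGroup.lift K ψ.toAddMonoidHom fun x hx => hψ x (iInf_le H j₀ hx))
  have ψK_trivial_iff (j : κ) :
      (∀ y ∈ (H j).map (QuotientAddGroup.mk' K), ψK y = 1) ↔ ∀ x ∈ H j, ψ x = 1 :=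
    Set.forall_mem_image
  obtain ⟨j, hj, hψj⟩ := (h.map (QuotientAddGroup.mk'_surjective K) hK)
    |>.exists_ne_addChar_eq_one_of_finite ψK ((ψK_trivial_iff j₀).2 hψ)
  exact ⟨j, hj, (ψK_trivial_iff j).1 hψj⟩

end IsCosetPartition

end CosetPartition

section Product

variable {ι : Type*} {G : ι → Type*} [∀ i, AddCommGroup (G i)]

theorem prod_addChar_eq_one_on_pi_iff [Fintype ι] {M : Type*} [CommMonoid M]
    (ψ : ∀ i, AddChar (G i) M) (L : ∀ i, AddSubgroup (G i)) :
    (∀ x ∈ AddSubgroup.pi Set.univ L,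
        (∏ i, (ψ i).compAddMonoidHom (Pi.evalAddMonoidHom G i)) x = 1) ↔
      ∀ i, ∀ x ∈ L i, ψ i x = 1 := by
  classical
  simp only [AddChar.prod_apply, AddChar.compAddMonoidHom_apply, Pi.evalAddMonoidHom_apply]
  refine ⟨fun h i x hx => ?_, fun h x hx => prod_eq_one fun i _ => h i (x i) (hx i trivial)⟩
  have hsingle := h (Pi.single i x) ((AddSubgroup.single_mem_pi i x).2 fun _ => hx)
  rwa [Fintype.prod_eq_single i fun j hj => by rw [Pi.single_eq_of_ne hj, AddChar.map_zero_eq_one],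
    Pi.single_eq_same] at hsingle

theorem IsCosetPartition.exists_ne_pi_factors_eq {R κ : Type*} [CommSemiring R] [IsDomain R]
    [CharZero R] [Finite ι] [Finite κ] [Nontrivial κ] {v : κ → ∀ i, G i}
    {L : κ → ∀ i, AddSubgroup (G i)}
    (h : IsCosetPartition v fun j => AddSubgroup.pi Set.univ (L j))
    (hL : ∀ j i, ∃ ψ : AddChar (G i) R, ∀ x, ψ x = 1 ↔ x ∈ L j i) :
    ∃ j j', j ≠ j' ∧ L j = L j' := by
  have := Fintype.ofFinite ι
  obtain ⟨_, ⟨j₀, rfl⟩, hmin⟩ := (Set.finite_range L).exists_minimal (Set.range_nonempty L)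
  choose ψ hψ using hL j₀
  have trivial_iff_le (j : κ) : (∀ x ∈ AddSubgroup.pi Set.univ (L j),
      (∏ i, (ψ i).compAddMonoidHom (Pi.evalAddMonoidHom G i)) x = 1) ↔ L j ≤ L j₀ := by
    simp only [prod_addChar_eq_one_on_pi_iff, hψ]
    rfl
  obtain ⟨j, hj, hψj⟩ := h.exists_ne_addChar_eq_one _ ((trivial_iff_le j₀).2 le_rfl)
  have hle := (trivial_iff_le j).1 hψj
  exact ⟨j, j₀, hj, hle.antisymm (hmin ⟨j, rfl⟩ hle)⟩

end Product

theorem exists_isPrimitiveRoot_units_complex (n : ℕ) : ∃ ζ : ℂˣ, IsPrimitiveRoot ζ n := by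
  obtain rfl | hn := eq_or_ne n 0
  · refine ⟨Units.mk0 2 two_ne_zero, IsPrimitiveRoot.coe_units_iff.1 ⟨pow_zero _, fun l hl => ?_⟩⟩
    have two_pow : (2 : ℂ) ^ l = 1 := hl
    have two_pow_nat : 2 ^ l = 1 := by exact_mod_cast two_pow
    simpa using two_pow_nat
  · exact ⟨_, (Complex.isPrimitiveRoot_exp n hn).isUnit_unit hn⟩

theorem exists_addChar_int_eq_one_iff_dvd (n : ℕ) :
    ∃ ψ : AddChar ℤ ℂ, ∀ x, ψ x = 1 ↔ (n : ℤ) ∣ x := by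
  obtain ⟨ζ, hζ⟩ := exists_isPrimitiveRoot_units_complex n
  refine ⟨AddChar.toMonoidHomEquiv.symm ((Units.coeHom ℂ).comp (zpowersHom ℂˣ ζ)), fun x => ?_⟩
  rw [← hζ.zpow_eq_one_iff_dvd, ← Units.val_eq_one]
  rfl

theorem tiling_lattices_translate_general {ι κ : Type*} [Finite ι] [Finite κ] [Nontrivial κ]
    (v : κ → ι → ℤ) (n : κ → ι → ℕ) (T : κ → Set (ι → ℤ))
    (hT : ∀ j, T j = {w : ι → ℤ | ∀ i, (n j i : ℤ) ∣ (w i - v j i)})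
    (hdisj : ∀ j j', j ≠ j' → Disjoint (T j) (T j'))
    (hcover : (⋃ j, T j) = Set.univ) :
    ∃ j j', j ≠ j' ∧ ∃ w : ι → ℤ, T j = (fun x => w + x) '' T j' := by
  let L (j : κ) (i : ι) : AddSubgroup ℤ := AddSubgroup.zmultiples (n j i : ℤ)
  have mem_T_iff (j : κ) (x : ι → ℤ) : x ∈ T j ↔ x - v j ∈ AddSubgroup.pi Set.univ (L j) := by
    simp [hT, L, AddSubgroup.mem_pi, Int.mem_zmultiples_iff]
  have hpart : IsCosetPartition v fun j => AddSubgroup.pi Set.univ (L j) := by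
    intro x
    simp only [← mem_T_iff]
    obtain ⟨j, hj⟩ := Set.iUnion_eq_univ_iff.1 hcover x
    exact ⟨j, hj, fun j' hj' => by_contra fun hne => (hdisj j' j hne).notMem_of_mem_left hj' hj⟩
  obtain ⟨j, j', hne, hL⟩ := hpart.exists_ne_pi_factors_eq fun j i => by
    simpa only [L, Int.mem_zmultiples_iff] using exists_addChar_int_eq_one_iff_dvd (n j i)
  refine ⟨j, j', hne, v j - v j', Set.ext fun x => ?_⟩
  rw [Set.image_add_left, Set.mem_preimage, mem_T_iff, mem_T_iff, hL]
  congr! 1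
  abel

/-- **Generalized Mirsky–Newman theorem** (translate form). If `ℤ^d` (`d ≥ 1`)
is the disjoint union of `k ≥ 2` cosets of Cartesian subgroups, then one of the
cosets is a translate of another. -/
theorem tiling_lattices_translate
    (d k : ℕ) (hd : 1 ≤ d) (hk : 2 ≤ k)
    (v : Fin k → (Fin d → ℤ)) (n : Fin k → Fin d → ℕ)
    (hn : ∀ j i, 0 < n j i)
    (T : Fin k → Set (Fin d → ℤ))
    (hT : ∀ j, T j = {w : Fin d → ℤ | ∀ i, (n j i : ℤ) ∣ (w i - v j i)})
    (hdisj : ∀ j j', j ≠ j' → Disjoint (T j) (T j'))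
    (hcover : (⋃ j, T j) = Set.univ) :
    ∃ j j', j ≠ j' ∧ ∃ w : Fin d → ℤ, T j = (fun x => w + x) '' T j' := by
  have := Fin.nontrivial_iff_two_le.2 hk
  exact tiling_lattices_translate_general v n T hT hdisj hcover
end

section
/- (Mirsky–Newman, d = 1 case.) Let k ≥ 2 and suppose ℤ is the disjoint union of k arithmetic progressions a_1 + n_1ℤ, …, a_k + n_kℤ with each n_j a positive integer. Then there exist indices j ≠ j' with n_j = n_{j'}. -/
/-!
Let an abelian group `G` be partitioned into at least two cosets `a j + H j`, and fix `i`. Suppose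
that every other `H j` contains some `h j ∉ H i`. The element `P = ∏ (h j - 1)` of the group ring
over `j ≠ i`, and all its translates, have coefficient sum zero on each coset `a j + H j` with
`j ≠ i` and on all of `G`, hence also on `a i + H i`. So `P` vanishes in the group ring of
`G ⧸ H i`. If `G ⧸ H i` is cyclic, a faithful character into `ℂ` sends `P` to a product of nonzero
factors, a contradiction. Hence every `H i` contains another `H j`, and when `H i` is minimal the
two are equal.
-/

section Partition

open AddMonoidAlgebra

variable {R G ι : Type*} [CommRing R] [AddCommGroup G]

/-- The augmentation of a group ring, that is, the sum of the coefficients. -/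
noncomputable abbrev augmentation : R[G] →ₐ[R] R := lift R R G 1

lemma mapDomainRingHom_single_sub_one {M N : Type*} [AddMonoid M] [AddMonoid N] (f : M →+ N)
    (m : M) : mapDomainRingHom R f (single m 1 - 1) = single (f m) 1 - 1 := by
  rw [map_sub, map_one, mapDomainRingHom_apply, mapDomain_single]

lemma sum_coeff_mapDomainRingHom_mk' [Fintype ι] {a : ι → G} {H : ι → AddSubgroup G}
    (hpart : ∀ x, ∃! j, x - a j ∈ H j) (P : R[G]) :
    ∑ j, (mapDomainRingHom R (QuotientAddGroup.mk' (H j)) P).coeff (a j) = augmentation P := by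
  classical
  induction P using induction_linear with
  | zero => simp
  | add P Q hP hQ =>
    simp only [map_add, coeff_add, Finsupp.add_apply, Finset.sum_add_distrib, hP, hQ]
  | single x r =>
    obtain ⟨j, hj, hunique⟩ := hpart x
    have hmk (l : ι) : (x : G ⧸ H l) = a l ↔ l = j := by
      rw [QuotientAddGroup.eq_iff_sub_mem]
      exact ⟨hunique l, fun h ↦ h ▸ hj⟩
    simp [Finsupp.single_apply, hmk]

lemma mapDomainRingHom_mk'_eq_zero_of_forall_ne [Finite ι] {a : ι → G} {H : ι → AddSubgroup G}
    (hpart : ∀ x, ∃! j, x - a j ∈ H j) {i : ι} {P : R[G]} (haug : augmentation P = 0)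
    (hP : ∀ j ≠ i, mapDomainRingHom R (QuotientAddGroup.mk' (H j)) P = 0) :
    mapDomainRingHom R (QuotientAddGroup.mk' (H i)) P = 0 := by
  cases nonempty_fintype ι
  ext c
  obtain ⟨x, rfl⟩ := QuotientAddGroup.mk_surjective c
  -- Translating by `a i - x` moves the coset of `x` to the coset `a i + H i` of the partition.
  have hsum := sum_coeff_mapDomainRingHom_mk' hpart (single (a i - x) 1 * P)
  have hother (j : ι) (hj : j ≠ i) : (mapDomainRingHom R (QuotientAddGroup.mk' (H j))
      (single (a i - x) 1 * P)).coeff (a j) = 0 := by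
    rw [map_mul, hP j hj, mul_zero, coeff_zero, Finsupp.zero_apply]
  rw [Fintype.sum_eq_single i hother, map_mul, map_mul, haug, mul_zero, mapDomainRingHom_apply,
    mapDomain_single, coeff_single_mul_apply] at hsum
  simpa using hsum

theorem exists_ne_le_of_injective_addChar [IsDomain R] [Finite ι] [Nontrivial ι] {a : ι → G}
    {H : ι → AddSubgroup G} (hpart : ∀ x, ∃! j, x - a j ∈ H j) {i : ι} {χ : AddChar (G ⧸ H i) R}
    (hχ : Function.Injective χ) : ∃ j ≠ i, H j ≤ H i := by
  classical
  cases nonempty_fintype ι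
  by_contra! hle
  choose! h hmem hnotMem using fun j hj ↦ SetLike.not_le_iff_exists.mp (hle j hj)
  set P : R[G] := ∏ j ∈ Finset.univ.erase i, (single (h j) 1 - 1) with hPdef
  have hdvd {j : ι} (hj : j ≠ i) : single (h j) 1 - 1 ∣ P :=
    Finset.dvd_prod_of_mem _ (Finset.mem_erase.mpr ⟨hj, Finset.mem_univ j⟩)
  have haug : augmentation P = 0 := by
    obtain ⟨j, hj⟩ := exists_ne i
    have hfactor : augmentation (single (h j) 1 - 1 : R[G]) = 0 := by simp
    exact zero_dvd_iff.mp (hfactor ▸ map_dvd augmentation (hdvd hj))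
  have hPj {j : ι} (hj : j ≠ i) : mapDomainRingHom R (QuotientAddGroup.mk' (H j)) P = 0 := by
    have hfactor : mapDomainRingHom R (QuotientAddGroup.mk' (H j)) (single (h j) 1 - 1) = 0 := by
      rw [mapDomainRingHom_single_sub_one, QuotientAddGroup.mk'_apply,
        (QuotientAddGroup.eq_zero_iff _).mpr (hmem j hj), ← one_def, sub_self]
    exact zero_dvd_iff.mp (hfactor ▸ map_dvd _ (hdvd hj))
  have hPi : mapDomainRingHom R (QuotientAddGroup.mk' (H i)) P = 0 :=
    mapDomainRingHom_mk'_eq_zero_of_forall_ne hpart haug fun _ ↦ hPj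
  have hprod : ∏ j ∈ Finset.univ.erase i, (χ (h j) - 1) = 0 := by
    have hlift := congrArg (lift R R _ χ.toMonoidHom) hPi
    simpa [hPdef, -mapDomainRingHom_apply, mapDomainRingHom_single_sub_one] using hlift
  obtain ⟨j, hj, hχj⟩ := Finset.prod_eq_zero_iff.mp hprod
  have hmk : (h j : G ⧸ H i) = 0 := hχ ((sub_eq_zero.mp hχj).trans χ.map_zero_eq_one.symm)
  exact hnotMem j (Finset.ne_of_mem_erase hj) ((QuotientAddGroup.eq_zero_iff _).mp hmk)

end Partition

lemma exists_injective_addChar_zmod (n : ℕ) :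
    ∃ χ : AddChar (ZMod n) ℂ, Function.Injective χ := by
  rcases n with _ | n
  · let χ : AddChar ℤ ℝ := ⟨fun x ↦ 2 ^ x, zpow_zero 2, zpow_add₀ two_ne_zero⟩
    exact ⟨Complex.ofRealHom.toMonoidHom.compAddChar χ, Complex.ofReal_injective.comp
      (zpow_right_injective₀ two_pos (by norm_num))⟩
  · exact ⟨ZMod.stdAddChar, ZMod.injective_stdAddChar⟩

lemma exists_injective_addChar_of_isAddCyclic (C : Type*) [AddGroup C] [hC : IsAddCyclic C] :
    ∃ χ : AddChar C ℂ, Function.Injective χ := by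
  obtain ⟨χ, hχ⟩ := exists_injective_addChar_zmod (Nat.card C)
  let e : C ≃+ ZMod (Nat.card C) := (zmodAddCyclicAddEquiv hC).symm
  exact ⟨χ.compAddMonoidHom e.toAddMonoidHom, hχ.comp e.injective⟩

theorem mirsky_newman_general {G ι : Type*} [AddCommGroup G] [Finite ι] [Nontrivial ι] (a : ι → G)
    (H : ι → AddSubgroup G) [∀ j, IsAddCyclic (G ⧸ H j)] (hpart : ∀ x, ∃! j, x - a j ∈ H j) :
    ∃ j j', j ≠ j' ∧ H j = H j' := by
  obtain ⟨_, ⟨i, rfl⟩, hmin⟩ := (Set.finite_range H).exists_minimal (Set.range_nonempty H)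
  obtain ⟨χ, hχ⟩ := exists_injective_addChar_of_isAddCyclic (G ⧸ H i)
  obtain ⟨j, hj, hle⟩ := exists_ne_le_of_injective_addChar hpart hχ
  exact ⟨j, i, hj, hle.antisymm (hmin ⟨j, rfl⟩ hle)⟩

/-- **Mirsky–Newman theorem** (the case `d = 1`). If `ℤ` is the disjoint union
of `k ≥ 2` arithmetic progressions `a j + (n j)ℤ` with each `n j` a positive
integer, then two of the differences coincide. -/
theorem mirsky_newman
    (k : ℕ) (hk : 2 ≤ k)
    (a : Fin k → ℤ) (n : Fin k → ℕ) (hn : ∀ j, 0 < n j)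
    (hdisj : ∀ j j', j ≠ j' →
      Disjoint {x : ℤ | (n j : ℤ) ∣ (x - a j)} {x : ℤ | (n j' : ℤ) ∣ (x - a j')})
    (hcover : (⋃ j, {x : ℤ | (n j : ℤ) ∣ (x - a j)}) = Set.univ) :
    ∃ j j', j ≠ j' ∧ n j = n j' := by
  have : Nontrivial (Fin k) := Fin.nontrivial_iff_two_le.mpr hk
  have hpart (x : ℤ) : ∃! j, x - a j ∈ AddSubgroup.zmultiples (n j : ℤ) := by
    simp only [Int.mem_zmultiples_iff]
    obtain ⟨j, hj⟩ := Set.iUnion_eq_univ_iff.mp hcover x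
    exact ⟨j, hj, fun l hl ↦ by_contra fun hne ↦ Set.disjoint_left.mp (hdisj l j hne) hl hj⟩
  have hcyclic (j : Fin k) : IsAddCyclic (ℤ ⧸ AddSubgroup.zmultiples (n j : ℤ)) :=
    isAddCyclic_of_surjective _ (QuotientAddGroup.mk'_surjective _)
  obtain ⟨j, j', hne, heq⟩ := mirsky_newman_general a _ hpart
  exact ⟨j, j', hne, by simpa using congrArg AddSubgroup.index heq⟩
end

section
/- Let d ≥ 1, let n_1, …, n_d and n'_1, …, n'_d be positive integers, let m'_i ∈ {0, …, n'_i − 1}, and set ζ_i = e^{2πi/n_i}. If there exists an index i_0 such that n_{i_0} does not divide n'_{i_0}, then lim_{t → 0⁺} t^d · ∏_{i=1}^d ((1−t)ζ_i)^{m'_i} / (1 − ((1−t)ζ_i)^{n'_i}) = 0; that is, the rational function ∏_i x_i^{m'_i}/(1 − x_i^{n'_i}) does not have a pole of order d along the radial approach to the point (ζ_1, …, ζ_d). -/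
open scoped BigOperators Real

/-!
Multiplying the product by `t ^ d` gives one factor `t` to each term. If `z ^ k = 1`, then
`1 - ((1 - t) z) ^ k = 1 - (1 - t) ^ k` vanishes to first order at `t = 0`, with leading
coefficient `k`, so `t * x ^ m / (1 - x ^ k)` has a finite limit along `x = (1 - t) z`. If
`z ^ k ≠ 1`, the denominator does not vanish at `t = 0` and the factor `t` forces the limit `0`.
A single index of the second kind makes the whole product tend to `0`.
-/

section

open Filter Topology Finset

lemma tendsto_pow_card_mul_prod {α ι M : Type*} [Fintype ι] [CommMonoid M] [TopologicalSpace M]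
    [ContinuousMul M] {l : Filter α} {u : α → M} {f : ι → α → M} {c : ι → M}
    (h : ∀ i, Tendsto (fun a => u a * f i a) l (𝓝 (c i))) :
    Tendsto (fun a => u a ^ Fintype.card ι * ∏ i, f i a) l (𝓝 (∏ i, c i)) := by
  simpa only [prod_mul_distrib, prod_const, card_univ] using
    tendsto_finsetProd univ fun i _ => h i

lemma one_sub_one_sub_mul_pow_eq_mul_geom_sum {R : Type*} [CommRing R] {z : R} {k : ℕ}
    (hz : z ^ k = 1) (t : R) :
    1 - ((1 - t) * z) ^ k = t * ∑ j ∈ range k, (1 - t) ^ j := by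
  rw [mul_pow, hz, mul_one, ← mul_neg_geom_sum, sub_sub_cancel]

lemma tendsto_ofReal_nhdsGT_zero_nhdsNE_zero :
    Tendsto ((↑) : ℝ → ℂ) (𝓝[>] 0) (𝓝[≠] 0) := by
  refine tendsto_nhdsWithin_iff.2 ⟨?_, ?_⟩
  · exact (Complex.continuous_ofReal.tendsto' 0 0 Complex.ofReal_zero).mono_left nhdsWithin_le_nhds
  · filter_upwards [self_mem_nhdsWithin] with t ht
    exact Complex.ofReal_ne_zero.2 ht.ne'

variable {𝕜 : Type*} [Field 𝕜] [TopologicalSpace 𝕜] [IsTopologicalDivisionRing 𝕜]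

lemma tendsto_mul_radial_factor_of_pow_ne_one {z : 𝕜} {k : ℕ} (hz : z ^ k ≠ 1) (m : ℕ) :
    Tendsto (fun t : 𝕜 => t * (((1 - t) * z) ^ m / (1 - ((1 - t) * z) ^ k))) (𝓝 0) (𝓝 0) := by
  have hden : 1 - ((1 - 0) * z) ^ k ≠ 0 := by
    simpa only [sub_zero, one_mul] using sub_ne_zero.2 hz.symm
  have hcont : ContinuousAt
      (fun t : 𝕜 => t * (((1 - t) * z) ^ m / (1 - ((1 - t) * z) ^ k))) 0 :=
    continuousAt_id.mul (ContinuousAt.div (by fun_prop) (by fun_prop) hden)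
  simpa only [zero_mul] using hcont.tendsto

lemma tendsto_mul_radial_factor_of_pow_eq_one {z : 𝕜} {k : ℕ} (hz : z ^ k = 1)
    (hk : (k : 𝕜) ≠ 0) (m : ℕ) :
    Tendsto (fun t : 𝕜 => t * (((1 - t) * z) ^ m / (1 - ((1 - t) * z) ^ k)))
      (𝓝[≠] 0) (𝓝 (z ^ m / k)) := by
  have hsum : ∑ j ∈ range k, (1 - 0 : 𝕜) ^ j = k := by simp
  have hcont : ContinuousAt
      (fun t : 𝕜 => ((1 - t) * z) ^ m / ∑ j ∈ range k, (1 - t) ^ j) 0 :=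
    ContinuousAt.div (by fun_prop) (by fun_prop) (hsum.trans_ne hk)
  have hlim : Tendsto (fun t : 𝕜 => ((1 - t) * z) ^ m / ∑ j ∈ range k, (1 - t) ^ j)
      (𝓝[≠] 0) (𝓝 (z ^ m / k)) := by
    have hval : ((1 - 0) * z) ^ m / ∑ j ∈ range k, (1 - 0 : 𝕜) ^ j = z ^ m / k := by
      rw [hsum, sub_zero, one_mul]
    exact hval ▸ hcont.tendsto.mono_left nhdsWithin_le_nhds
  refine hlim.congr' ?_
  filter_upwards [self_mem_nhdsWithin] with t ht
  rw [one_sub_one_sub_mul_pow_eq_mul_geom_sum hz, ← mul_div_assoc, mul_div_mul_left _ _ ht]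

theorem tendsto_pow_card_mul_prod_radial_factor [DecidableEq 𝕜] {ι : Type*} [Fintype ι]
    {k : ι → ℕ} (hk : ∀ i, (k i : 𝕜) ≠ 0) (m : ι → ℕ) (z : ι → 𝕜) :
    Tendsto
      (fun t : 𝕜 => t ^ Fintype.card ι * ∏ i, ((1 - t) * z i) ^ m i / (1 - ((1 - t) * z i) ^ k i))
      (𝓝[≠] 0) (𝓝 (∏ i, if z i ^ k i = 1 then z i ^ m i / k i else 0)) := by
  refine tendsto_pow_card_mul_prod fun i => ?_
  split_ifs with hz
  · exact tendsto_mul_radial_factor_of_pow_eq_one hz (hk i) (m i)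
  · exact (tendsto_mul_radial_factor_of_pow_ne_one hz (m i)).mono_left nhdsWithin_le_nhds

theorem radial_limit_zero_of_not_dvd_general {ι : Type*} [Fintype ι] {k : ι → ℕ}
    (hk : ∀ i, (k i : 𝕜) ≠ 0) (m : ι → ℕ) {z : ι → 𝕜} (hz : ∃ i₀, z i₀ ^ k i₀ ≠ 1) :
    Tendsto
      (fun t : 𝕜 => t ^ Fintype.card ι * ∏ i, ((1 - t) * z i) ^ m i / (1 - ((1 - t) * z i) ^ k i))
      (𝓝[≠] 0) (𝓝 0) := by
  classical
  obtain ⟨i₀, hi₀⟩ := hz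
  have hprod : ∏ i, (if z i ^ k i = 1 then z i ^ m i / k i else 0) = 0 :=
    prod_eq_zero (mem_univ i₀) (if_neg hi₀)
  simpa only [hprod] using tendsto_pow_card_mul_prod_radial_factor hk m z

end

/-- If some `n i₀` does not divide `n' i₀`, then the rational function
`∏ i, x i ^ m' i / (1 - x i ^ n' i)` has no pole of order `d` along the radial
approach to `(ζ 1, …, ζ d)` where `ζ i = e^{2πi / n i}`:
`t^d` times the function (evaluated at `x i = (1 - t) ζ i`) tends to `0`
as `t → 0⁺`. -/
theorem radial_limit_zero_of_not_dvd
    (d : ℕ) (hd : 1 ≤ d) (n n' : Fin d → ℕ)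
    (hn : ∀ i, 0 < n i) (hn' : ∀ i, 0 < n' i)
    (m' : Fin d → ℕ) (hm' : ∀ i, m' i < n' i)
    (ζ : Fin d → ℂ) (hζ : ∀ i, ζ i = Complex.exp (2 * π * Complex.I / n i))
    (h : ∃ i₀, ¬ n i₀ ∣ n' i₀) :
    Filter.Tendsto
      (fun t : ℝ =>
        (t : ℂ) ^ d *
          ∏ i, ((1 - (t : ℂ)) * ζ i) ^ m' i / (1 - ((1 - (t : ℂ)) * ζ i) ^ n' i))
      (nhdsWithin 0 (Set.Ioi 0)) (nhds 0) := by
  have hroot (i : Fin d) : IsPrimitiveRoot (ζ i) (n i) :=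
    hζ i ▸ Complex.isPrimitiveRoot_exp (n i) (hn i).ne'
  simpa only [Fintype.card_fin, Function.comp_def] using
    (radial_limit_zero_of_not_dvd_general (fun i => Nat.cast_ne_zero.2 (hn' i).ne') m'
      (h.imp fun i₀ => mt ((hroot i₀).pow_eq_one_iff_dvd _).1)).comp
      tendsto_ofReal_nhdsGT_zero_nhdsNE_zero
end
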